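/- Let s ∈ ℕ with s ≥ 2, and let a, p ∈ ℝ with p ≠ 1 and |a| ≤ min(1, 2/p − 1). Then Li_s(a) = Li*_{{1}_s}(1−p, {1}_{s−2}, 1 + ap/(1−p)) − Li*_{{1}_s}(1−p, {1}_{s−1}), where Li_s(a) = Σ_{n≥1} a^n/n^s is the one-dimensional polylogarithm. -/

import Mathlib

/-- One-dimensional polylogarithm `Li_s(x) = ∑_{n≥1} x^n/n^s`. -/
noncomputable def Li (s : ℕ) (x : ℝ) : ℝ := ∑' n : ℕ, x ^ (n + 1) / (n + 1 : ℝ) ^ s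

/-- Multiple polylogarithm
`Li*_{s₁,…,s_d}(x₁,…,x_d) = ∑_{n₁ ≥ ⋯ ≥ n_d ≥ 1} ∏ᵢ xᵢ^{nᵢ}/nᵢ^{sᵢ}`. -/
noncomputable def LiStar (s : List ℕ) (x : List ℝ) : ℝ :=
  ∑' m : {m : Fin s.length → ℕ // (∀ i j : Fin s.length, i ≤ j → m j ≤ m i) ∧ ∀ i, 1 ≤ m i},
    ∏ i : Fin s.length, x.getD (i : ℕ) 0 ^ m.1 i / (m.1 i : ℝ) ^ s.get i

/-!
Write `q = 1 - p` and `q w = a p`. Summing from the innermost index outwards, the difference of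
the two star sums is `∑ q ^ n / n * (H ^ (s - 1)) g n`, where `g n = (1 + w) ^ n - 1` and
`(H g) n = ∑_{k=1}^n g k / k`. The binomial coefficients `n ↦ C(n, k)` are eigenvectors of `H`
with eigenvalue `1 / k`, so expanding `g` gives the double series of
`q ^ n / n * C(n, k) * w ^ k / k ^ (s - 1)`. Summing over `n` first turns it into
`∑ (q w / (1 - q)) ^ k / k ^ s`, and `q w / (1 - q) = a`. The bound on `|a|` amounts to
`|q| (1 + |w|) ≤ 1`, which makes the double series absolutely convergent.
-/

lemma one_add_pow_sub_one {R : Type*} [CommRing R] (w : R) {n N : ℕ} (h : n ≤ N) :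
    (1 + w) ^ n - 1 = ∑ k ∈ Finset.range N, (n.choose (k + 1) : R) * w ^ (k + 1) := by
  have hextend : ∑ k ∈ Finset.range n, (n.choose (k + 1) : R) * w ^ (k + 1) =
      ∑ k ∈ Finset.range N, (n.choose (k + 1) : R) * w ^ (k + 1) :=
    Finset.sum_subset (Finset.range_mono h) fun k _ hk => by
      rw [Nat.choose_eq_zero_of_lt (by simpa [Nat.lt_succ_iff] using hk), Nat.cast_zero, zero_mul]
  rw [← hextend, add_comm, add_pow, Finset.sum_range_succ']
  simp [mul_comm]

section HarmonicSum

variable {K : Type*} [Field K]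

/-- The operator `(H g)(n) = ∑_{k=1}^n g(k)/k` on sequences. Its powers are the inner sums over
`n ≥ n₂ ≥ ⋯ ≥ n_d ≥ 1` of a multiple polylogarithm with all exponents `1`. -/
def harmonicSum : Module.End K (ℕ → K) where
  toFun g n := ∑ k ∈ Finset.Icc 1 n, g k / k
  map_add' g h := by
    ext n
    simp only [Pi.add_apply, add_div, Finset.sum_add_distrib]
  map_smul' r g := by
    ext n
    simp only [Pi.smul_apply, smul_eq_mul, mul_div_assoc, Finset.mul_sum, RingHom.id_apply]

lemma harmonicSum_apply (g : ℕ → K) (n : ℕ) :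
    harmonicSum g n = ∑ k ∈ Finset.Icc 1 n, g k / k := rfl

lemma harmonicSum_nonneg {g : ℕ → ℝ} (hg : 0 ≤ g) : 0 ≤ harmonicSum g :=
  fun n => show 0 ≤ ∑ k ∈ Finset.Icc 1 n, g k / k from
    Finset.sum_nonneg fun k _ => div_nonneg (hg k) k.cast_nonneg

lemma harmonicSum_pow_pow_sub_one (d : ℕ) (y : K) (n : ℕ) :
    (harmonicSum ^ d) (fun k => y ^ k - 1) n =
      (harmonicSum ^ d) (fun k => y ^ k) n - (harmonicSum ^ d) (fun k => 1 ^ k) n := by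
  simp only [one_pow]
  exact congrFun (map_sub (harmonicSum ^ d) (fun k => y ^ k) fun _ => 1) n

variable [CharZero K]

lemma choose_succ_succ_div_succ (n k : ℕ) :
    ((n + 1).choose (k + 1) : K) / (n + 1 : ℕ) = n.choose k / (k + 1 : ℕ) := by
  rw [div_eq_div_iff (Nat.cast_ne_zero.2 n.succ_ne_zero) (Nat.cast_ne_zero.2 k.succ_ne_zero)]
  exact_mod_cast (Nat.add_one_mul_choose_eq n k).symm.trans (mul_comm _ _)

lemma harmonicSum_choose (k n : ℕ) :
    harmonicSum (fun m => (m.choose (k + 1) : K)) n = n.choose (k + 1) / (k + 1 : ℕ) := by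
  rw [harmonicSum_apply]
  induction n with
  | zero => simp
  | succ n ih =>
    rw [Finset.sum_Icc_succ_top (by omega), ih, choose_succ_succ_div_succ, ← add_div,
      ← Nat.cast_add, add_comm, ← Nat.choose_succ_succ']

lemma harmonicSum_pow_one_add_pow_sub_one (w : K) (d : ℕ) {n N : ℕ} (h : n ≤ N) :
    (harmonicSum ^ d) (fun m => (1 + w) ^ m - 1) n =
      ∑ k ∈ Finset.range N, (n.choose (k + 1) : K) * (w ^ (k + 1) / (k + 1 : ℕ) ^ d) := by
  induction d generalizing n with
  | zero => simpa using one_add_pow_sub_one w h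
  | succ d ih =>
    rw [pow_succ', Module.End.mul_apply, harmonicSum_apply]
    calc ∑ m ∈ Finset.Icc 1 n, (harmonicSum ^ d) (fun m => (1 + w) ^ m - 1) m / (m : K)
        = ∑ m ∈ Finset.Icc 1 n, ∑ k ∈ Finset.range N,
            w ^ (k + 1) / (k + 1 : ℕ) ^ d * ((m.choose (k + 1) : K) / m) := by
          refine Finset.sum_congr rfl fun m hm => ?_
          rw [ih ((Finset.mem_Icc.1 hm).2.trans h), Finset.sum_div]
          exact Finset.sum_congr rfl fun k _ => by ring
      _ = ∑ k ∈ Finset.range N, w ^ (k + 1) / (k + 1 : ℕ) ^ d *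
            harmonicSum (fun m => (m.choose (k + 1) : K)) n := by
          rw [Finset.sum_comm]
          simp only [harmonicSum_apply, Finset.mul_sum]
      _ = _ := by
          refine Finset.sum_congr rfl fun k _ => ?_
          rw [harmonicSum_choose, div_mul_div_comm, ← pow_succ, mul_comm (w ^ _), mul_div_assoc]

end HarmonicSum

section Summability

variable {𝕜 : Type*} [RCLike 𝕜] {q : 𝕜}

-- `q ^ n * harmonicSum g n` is the Cauchy product of `q ^ n * g n / n` with a geometric series.
lemma summable_pow_mul_harmonicSum_div_pow (hq : ‖q‖ < 1) {g : ℕ → 𝕜} {e : ℕ}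
    (hg : Summable fun n : ℕ => q ^ n * g n / (n : 𝕜) ^ (e + 1)) :
    Summable fun n : ℕ => q ^ n * harmonicSum g n / (n : 𝕜) ^ e := by
  have hgeom : Summable fun n : ℕ => ‖‖q‖ ^ n‖ := by
    simpa using summable_geometric_of_lt_one (norm_nonneg q) hq
  have hcauchy := summable_norm_sum_mul_range_of_summable_norm hg.norm.norm hgeom
  refine hcauchy.of_norm_bounded fun n => ?_
  rw [harmonicSum_apply, Finset.mul_sum, Finset.sum_div]
  refine (norm_sum_le _ _).trans (le_trans ?_ (Real.le_norm_self _))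
  refine (Finset.sum_le_sum fun k hk => ?_).trans
    (Finset.sum_le_sum_of_subset_of_nonneg
      (fun k hk => Finset.mem_range_succ_iff.2 (Finset.mem_Icc.1 hk).2)
      fun k _ _ => by positivity)
  obtain ⟨hk1, hkn⟩ := Finset.mem_Icc.1 hk
  have : (0 : ℝ) < k := Nat.cast_pos.2 hk1
  calc ‖q ^ n * (g k / k) / (n : 𝕜) ^ e‖
      = ‖q‖ ^ n * ‖g k‖ / (k * (n : ℝ) ^ e) := by
        simp only [norm_div, norm_mul, norm_pow, RCLike.norm_natCast]
        ring
    _ ≤ ‖q‖ ^ n * ‖g k‖ / (k * (k : ℝ) ^ e) := by gcongr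
    _ = ‖q ^ k * g k / (k : 𝕜) ^ (e + 1)‖ * ‖q‖ ^ (n - k) := by
        simp only [norm_div, norm_mul, norm_pow, RCLike.norm_natCast]
        rw [← Nat.add_sub_of_le hkn, pow_add, Nat.add_sub_cancel_left]
        ring

lemma summable_pow_mul_harmonicSum_pow_div_pow (hq : ‖q‖ < 1) (d : ℕ) {g : ℕ → 𝕜} {e : ℕ}
    (hg : Summable fun n : ℕ => q ^ n * g n / (n : 𝕜) ^ (e + d)) :
    Summable fun n : ℕ => q ^ n * (harmonicSum ^ d) g n / (n : 𝕜) ^ e := by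
  induction d generalizing g with
  | zero => simpa using hg
  | succ d ih => exact ih (summable_pow_mul_harmonicSum_div_pow hq hg)

lemma summable_pow_mul_harmonicSum_pow_pow_div (hq : ‖q‖ < 1) {y : 𝕜} (hqy : ‖q * y‖ ≤ 1)
    (d : ℕ) :
    Summable fun n : ℕ =>
      q ^ (n + 1) * (harmonicSum ^ (d + 1)) (fun k => y ^ k) (n + 1) / (n + 1 : ℕ) := by
  have hbase : Summable fun n : ℕ => q ^ n * y ^ n / (n : 𝕜) ^ (1 + (d + 1)) := by
    refine (Real.summable_one_div_nat_pow.2 (by omega : 1 < 1 + (d + 1))).of_norm_bounded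
      fun n => ?_
    rw [← mul_pow, norm_div, norm_pow, norm_pow, RCLike.norm_natCast]
    gcongr
    exact pow_le_one₀ (norm_nonneg _) hqy
  simpa only [pow_one] using (summable_nat_add_iff 1).2
    (summable_pow_mul_harmonicSum_pow_div_pow hq (d + 1) hbase)

end Summability

section StarIndex

lemma antitone_snoc {α : Type*} [Preorder α] {d : ℕ} {m : Fin (d + 1) → α} (hm : Antitone m)
    {a : α} (ha : a ≤ m (Fin.last d)) : Antitone (Fin.snoc m a : Fin (d + 2) → α) := by
  rw [Fin.antitone_iff_succ_le]
  intro i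
  cases i using Fin.lastCases with
  | last => simpa using ha
  | cast i =>
    rw [Fin.succ_castSucc, Fin.snoc_castSucc (α := fun _ => α), Fin.snoc_castSucc (α := fun _ => α)]
    exact hm i.castSucc_lt_succ.le

/-- The index set of a multiple polylogarithm of depth `d`: the weakly decreasing `d`-tuples of
positive integers, encoded as functions on `Fin d`. -/
abbrev StarIndex (d : ℕ) : Type :=
  {m : Fin d → ℕ // Antitone m ∧ ∀ i, 1 ≤ m i}

namespace StarIndex

variable {d : ℕ}

/-- The smallest entry of a nonempty tuple. -/
def last (m : StarIndex (d + 1)) : ℕ := m.1 (Fin.last d)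

/-- Append a positive integer at most the smallest entry. -/
def snoc (m : StarIndex (d + 1)) (k : Finset.Icc 1 m.last) : StarIndex (d + 2) :=
  ⟨Fin.snoc m.1 k, antitone_snoc m.2.1 (Finset.mem_Icc.1 k.2).2, by
    rw [Fin.forall_fin_succ']
    simpa using ⟨m.2.2, (Finset.mem_Icc.1 k.2).1⟩⟩

/-- Split off the smallest entry. -/
def snocEquiv (d : ℕ) : (Σ m : StarIndex (d + 1), Finset.Icc 1 m.last) ≃ StarIndex (d + 2) where
  toFun x := x.1.snoc x.2
  invFun m := ⟨⟨Fin.init m.1, fun _ _ h => m.2.1 (Fin.castSucc_le_castSucc_iff.2 h),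
    fun i => m.2.2 i.castSucc⟩, ⟨m.last, Finset.mem_Icc.2 ⟨m.2.2 _, m.2.1 (Fin.le_last _)⟩⟩⟩
  left_inv _ := Sigma.subtype_ext (Subtype.ext (Fin.init_snoc (α := fun _ => ℕ) _ _))
    (Fin.snoc_last (α := fun _ => ℕ) _ _)
  right_inv _ := Subtype.ext (Fin.snoc_init_self _)

/-- The one-tuples are the positive integers, shifted here by one to `ℕ`. -/
def oneEquiv : ℕ ≃ StarIndex 1 where
  toFun n := ⟨fun _ => n + 1, antitone_const, fun _ => Nat.le_add_left 1 n⟩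
  invFun m := m.last - 1
  left_inv n := Nat.add_sub_cancel n 1
  right_inv m := Subtype.ext (funext fun i => by
    rw [Subsingleton.elim i (Fin.last 0)]
    exact Nat.sub_add_cancel (m.2.2 _))

end StarIndex

end StarIndex

section StarTerm

variable {K : Type*} [Field K] {d : ℕ}

/-- The summand `c(n₁) g(n_d) / (n₁ ⋯ n_d)` of a star sum of depth `d` with all exponents `1`,
weighted by sequences `c` and `g` at the outermost and the innermost index. -/
def starTerm (c g : ℕ → K) (m : StarIndex (d + 1)) : K :=
  c (m.1 0) * g m.last / ∏ i, (m.1 i : K)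

lemma starTerm_snoc (c g : ℕ → K) (m : StarIndex (d + 1)) (k : Finset.Icc 1 m.last) :
    starTerm c g (m.snoc k) = c (m.1 0) * (g k / (k : ℕ)) / ∏ i, (m.1 i : K) := by
  have hzero : (m.snoc k).1 0 = m.1 0 := Fin.snoc_castSucc (α := fun _ => ℕ) k.1 m.1 0
  have hlast : (m.snoc k).last = k := Fin.snoc_last (α := fun _ => ℕ) _ _
  have hprod : ∏ i, ((m.snoc k).1 i : K) = (∏ i, (m.1 i : K)) * (k : ℕ) := by
    rw [Fin.prod_univ_castSucc]
    simp [StarIndex.snoc]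
  rw [starTerm, hzero, hlast, hprod, ← mul_div_assoc, div_div, mul_comm (k.1 : K)]

lemma sum_starTerm_snoc (c g : ℕ → K) (m : StarIndex (d + 1)) :
    ∑ k, starTerm c g (m.snoc k) = starTerm c (harmonicSum g) m := by
  simp only [starTerm_snoc]
  rw [← Finset.sum_div, ← Finset.mul_sum,
    Finset.sum_coe_sort (Finset.Icc 1 m.last) fun k => g k / (k : K)]
  rfl

lemma starTerm_oneEquiv (c g : ℕ → K) (n : ℕ) :
    starTerm c g (StarIndex.oneEquiv n) = c (n + 1) * g (n + 1) / (n + 1 : ℕ) := by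
  simp [starTerm, StarIndex.oneEquiv, StarIndex.last]

lemma starTerm_nonneg {c g : ℕ → ℝ} (hc : 0 ≤ c) (hg : 0 ≤ g) (m : StarIndex (d + 1)) :
    0 ≤ starTerm c g m :=
  div_nonneg (mul_nonneg (hc _) (hg _)) (Finset.prod_nonneg fun _ _ => Nat.cast_nonneg _)

lemma norm_starTerm {𝕜 : Type*} [RCLike 𝕜] (c g : ℕ → 𝕜) (m : StarIndex (d + 1)) :
    ‖starTerm c g m‖ = starTerm (fun n => ‖c n‖) (fun n => ‖g n‖) m := by
  simp only [starTerm, norm_div, norm_mul, norm_prod, RCLike.norm_natCast]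

lemma summable_starTerm_of_nonneg {c : ℕ → ℝ} (hc : 0 ≤ c) (d : ℕ) {g : ℕ → ℝ} (hg : 0 ≤ g)
    (h : Summable fun n : ℕ => c (n + 1) * (harmonicSum ^ d) g (n + 1) / (n + 1 : ℕ)) :
    Summable (starTerm (d := d) c g) := by
  induction d generalizing g with
  | zero =>
    rw [← StarIndex.oneEquiv.summable_iff]
    exact h.congr fun n => (starTerm_oneEquiv c g n).symm
  | succ d ih =>
    rw [← (StarIndex.snocEquiv d).summable_iff]
    refine (summable_sigma_of_nonneg fun _ => starTerm_nonneg hc hg _).2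
      ⟨fun m => (hasSum_fintype _).summable, ?_⟩
    refine (ih (harmonicSum_nonneg hg) h).congr fun m => ?_
    exact (sum_starTerm_snoc c g m).symm.trans (tsum_fintype _).symm

lemma hasSum_harmonicSum_pow_of_hasSum_starTerm [TopologicalSpace K] [ContinuousAdd K]
    [RegularSpace K] {c : ℕ → K} (d : ℕ) {g : ℕ → K} {S : K}
    (h : HasSum (starTerm (d := d) c g) S) :
    HasSum (fun n : ℕ => c (n + 1) * (harmonicSum ^ d) g (n + 1) / (n + 1 : ℕ)) S := by
  induction d generalizing g with
  | zero =>
    rw [← StarIndex.oneEquiv.hasSum_iff] at h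
    exact (funext (starTerm_oneEquiv c g) : starTerm c g ∘ StarIndex.oneEquiv = _) ▸ h
  | succ d ih =>
    rw [← (StarIndex.snocEquiv d).hasSum_iff] at h
    exact ih (h.sigma fun m => sum_starTerm_snoc c g m ▸ hasSum_fintype _)

end StarTerm

section LiStar

lemma liStar_replicate_one (d : ℕ) (x : List ℝ) :
    LiStar (List.replicate d 1) x =
      ∑' m : StarIndex d, ∏ i : Fin d, x.getD (i : ℕ) 0 ^ m.1 i / (m.1 i : ℝ) := by
  suffices ∀ l : List ℕ, l.length = d → (∀ i, l.get i = 1) → LiStar l x =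
      ∑' m : StarIndex d, ∏ i : Fin d, x.getD (i : ℕ) 0 ^ m.1 i / (m.1 i : ℝ) from
    this _ (by simp) (by simp)
  rintro l rfl hl
  simp only [LiStar, hl, pow_one]
  rfl

lemma liStar_eq_tsum_starTerm (d : ℕ) (q y : ℝ) :
    LiStar (List.replicate (d + 2) 1) (q :: (List.replicate d (1 : ℝ) ++ [y])) =
      ∑' m : StarIndex (d + 2), starTerm (fun n => q ^ n) (fun n => y ^ n) m := by
  rw [liStar_replicate_one]
  refine tsum_congr fun m => ?_
  have hmiddle (i : Fin d) : (List.replicate d (1 : ℝ) ++ [y]).getD i 0 = 1 := by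
    rw [List.getD_append _ _ _ _ (by simp)]
    simp
  have hlast : (List.replicate d (1 : ℝ) ++ [y]).getD d 0 = y := by
    rw [List.getD_append_right _ _ _ _ (by simp)]
    simp
  rw [Finset.prod_div_distrib, Fin.prod_univ_succ, Fin.prod_univ_castSucc]
  simp only [Fin.val_zero, List.getD_cons_zero, Fin.val_succ, List.getD_cons_succ,
    Fin.val_castSucc, hmiddle, one_pow, Finset.prod_const_one, one_mul, Fin.val_last, hlast]
  rfl

theorem hasSum_liStar {q y : ℝ} (hq : |q| < 1) (hqy : |q * y| ≤ 1) (d : ℕ) :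
    HasSum (fun n : ℕ =>
        q ^ (n + 1) * (harmonicSum ^ (d + 1)) (fun k => y ^ k) (n + 1) / (n + 1 : ℕ))
      (LiStar (List.replicate (d + 2) 1) (q :: (List.replicate d (1 : ℝ) ++ [y]))) := by
  have habs := summable_pow_mul_harmonicSum_pow_pow_div (q := |q|) (y := |y|) (by simpa using hq)
    (by simpa [abs_mul] using hqy) d
  have hterm : Summable (starTerm (d := d + 1) (fun n => q ^ n) fun n => y ^ n) := by
    refine Summable.of_norm ?_
    simp only [norm_starTerm, norm_pow, Real.norm_eq_abs]
    exact summable_starTerm_of_nonneg (fun n => pow_nonneg (abs_nonneg q) n) (d + 1)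
      (fun n => pow_nonneg (abs_nonneg y) n) habs
  rw [liStar_eq_tsum_starTerm]
  exact hasSum_harmonicSum_pow_of_hasSum_starTerm (d + 1) hterm.hasSum

end LiStar

section EulerTransform

variable {K 𝕜 : Type*}

/-- The summand `q^n/n * C(n,k) * w^k/k^d`, for `x = (n - 1, k - 1)`, of the double series whose two
iterated sums are an Euler transform of the polylogarithm series and that series itself. -/
def eulerTerm [Field K] (q w : K) (d : ℕ) (x : ℕ × ℕ) : K :=
  q ^ (x.1 + 1) * ((x.1 + 1).choose (x.2 + 1) / (x.1 + 1 : ℕ)) *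
    (w ^ (x.2 + 1) / (x.2 + 1 : ℕ) ^ d)

lemma norm_eulerTerm [RCLike 𝕜] (q w : 𝕜) (d : ℕ) (x : ℕ × ℕ) :
    ‖eulerTerm q w d x‖ = eulerTerm ‖q‖ ‖w‖ d x := by
  simp only [eulerTerm, norm_mul, norm_div, norm_pow, RCLike.norm_natCast]

lemma hasSum_eulerTerm_right [Field K] [CharZero K] [TopologicalSpace K] (q w : K) (d n : ℕ) :
    HasSum (fun k => eulerTerm q w d (n, k))
      (q ^ (n + 1) * (harmonicSum ^ d) (fun m => (1 + w) ^ m - 1) (n + 1) / (n + 1 : ℕ)) := by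
  rw [harmonicSum_pow_one_add_pow_sub_one w d le_rfl, Finset.mul_sum, Finset.sum_div]
  have hterm (k : ℕ) : q ^ (n + 1) * (((n + 1).choose (k + 1) : K) *
      (w ^ (k + 1) / (k + 1 : ℕ) ^ d)) / (n + 1 : ℕ) = eulerTerm q w d (n, k) := by
    rw [eulerTerm]
    ring
  simp only [hterm]
  refine hasSum_sum_of_ne_finset_zero fun k hk => ?_
  have hnk : n + 1 < k + 1 := by simpa using hk
  simp [eulerTerm, Nat.choose_eq_zero_of_lt hnk]

lemma hasSum_choose_div_mul_geometric [NormedField K] [CharZero K] {q : K} (hq : ‖q‖ < 1) (k : ℕ) :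
    HasSum (fun n : ℕ => q ^ (n + 1) * ((n + 1).choose (k + 1) / (n + 1 : ℕ)))
      ((q / (1 - q)) ^ (k + 1) / (k + 1 : ℕ)) := by
  have hsmall : ∑ n ∈ Finset.range k, q ^ (n + 1) * (n.choose k / (k + 1 : ℕ)) = 0 :=
    Finset.sum_eq_zero fun n hn => by
      simp [Nat.choose_eq_zero_of_lt (Finset.mem_range.1 hn)]
  have hshift (n : ℕ) : q ^ (k + 1) / (k + 1 : ℕ) * ((n + k).choose k * q ^ n) =
      q ^ (n + k + 1) * ((n + k).choose k / (k + 1 : ℕ)) := by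
    rw [add_assoc n, pow_add]
    ring
  simp only [choose_succ_succ_div_succ]
  rw [← hasSum_nat_add_iff' k, hsmall, sub_zero, div_pow, div_right_comm,
    div_eq_mul_one_div (_ / _)]
  simp only [← hshift]
  exact (hasSum_choose_mul_geometric_of_norm_lt_one k hq).mul_left _

lemma hasSum_eulerTerm_left [NormedField K] [CharZero K] {q : K} (hq : ‖q‖ < 1) (w : K)
    (d k : ℕ) :
    HasSum (fun n => eulerTerm q w d (n, k))
      ((q * w / (1 - q)) ^ (k + 1) / (k + 1 : ℕ) ^ (d + 1)) := by
  have hvalue : (q * w / (1 - q)) ^ (k + 1) / ((k + 1 : ℕ) : K) ^ (d + 1) =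
      (q / (1 - q)) ^ (k + 1) / (k + 1 : ℕ) * (w ^ (k + 1) / (k + 1 : ℕ) ^ d) := by
    rw [div_mul_div_comm, ← mul_pow, ← pow_succ', div_mul_eq_mul_div]
  rw [hvalue]
  exact (hasSum_choose_div_mul_geometric hq k).mul_right _

variable [RCLike 𝕜] {q w : 𝕜}

lemma summable_eulerTerm (hq : ‖q‖ < 1) (hqw : ‖q‖ * (1 + ‖w‖) ≤ 1) (d : ℕ) :
    Summable (eulerTerm q w (d + 1)) := by
  have hnorm : ‖‖q‖‖ < 1 := by rwa [norm_norm]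
  have hpow := summable_pow_mul_harmonicSum_pow_pow_div (y := 1 + ‖w‖) hnorm
    (by rwa [Real.norm_of_nonneg (by positivity)]) d
  have hone := summable_pow_mul_harmonicSum_pow_pow_div (y := 1) hnorm (by simpa using hq.le) d
  refine Summable.of_norm ?_
  simp only [norm_eulerTerm]
  rw [summable_prod_of_nonneg fun x => norm_eulerTerm q w (d + 1) x ▸ norm_nonneg _]
  refine ⟨fun n => (hasSum_eulerTerm_right _ _ _ n).summable, (hpow.sub hone).congr fun n => ?_⟩
  rw [(hasSum_eulerTerm_right _ _ _ n).tsum_eq, harmonicSum_pow_pow_sub_one, mul_sub, sub_div]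

theorem hasSum_harmonicSum_pow_one_add_pow_sub_one (hq : ‖q‖ < 1) (hqw : ‖q‖ * (1 + ‖w‖) ≤ 1)
    (d : ℕ) :
    HasSum (fun n : ℕ => q ^ (n + 1) *
        (harmonicSum ^ (d + 1)) (fun m => (1 + w) ^ m - 1) (n + 1) / (n + 1 : ℕ))
      (∑' k : ℕ, (q * w / (1 - q)) ^ (k + 1) / (k + 1 : ℕ) ^ (d + 2)) := by
  have hsum := (summable_eulerTerm hq hqw d).hasSum
  have hleft := ((Equiv.prodComm ℕ ℕ).hasSum_iff.2 hsum).prod_fiberwise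
    (hasSum_eulerTerm_left hq w (d + 1))
  rw [hleft.tsum_eq]
  exact hsum.prod_fiberwise (hasSum_eulerTerm_right q w (d + 1))

end EulerTransform

theorem liStar_sub_liStar {q w : ℝ} (hq : |q| < 1) (hqw : |q| * (1 + |w|) ≤ 1) (d : ℕ) :
    LiStar (List.replicate (d + 2) 1) (q :: (List.replicate d (1 : ℝ) ++ [1 + w])) -
        LiStar (List.replicate (d + 2) 1) (q :: List.replicate (d + 1) (1 : ℝ)) =
      Li (d + 2) (q * w / (1 - q)) := by
  have hpow : |q * (1 + w)| ≤ 1 := by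
    rw [abs_mul]
    refine le_trans ?_ hqw
    gcongr
    simpa using abs_add_le 1 w
  have hdiff := (hasSum_liStar hq hpow d).sub (hasSum_liStar (y := 1) hq (by simpa using hq.le) d)
  simp only [← sub_div, ← mul_sub, ← harmonicSum_pow_pow_sub_one] at hdiff
  rw [List.replicate_succ' (n := d),
    hdiff.unique (hasSum_harmonicSum_pow_one_add_pow_sub_one hq hqw d)]
  simp only [Li, Nat.cast_add, Nat.cast_one]

lemma pos_of_abs_le_two_div_sub_one {a p : ℝ} (ha : |a| ≤ 2 / p - 1) : 0 < p := by
  by_contra! hp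
  have := div_nonpos_of_nonneg_of_nonpos zero_le_two hp
  linarith [abs_nonneg a]

lemma abs_one_sub_add_abs_mul_le_one {a p : ℝ} (ha : |a| ≤ min 1 (2 / p - 1)) :
    |1 - p| + |a| * p ≤ 1 := by
  obtain ⟨ha1, ha2⟩ := le_min_iff.1 ha
  have hp := pos_of_abs_le_two_div_sub_one ha2
  have hap : (|a| + 1) * p ≤ 2 := (le_div_iff₀ hp).1 (by linarith)
  have hap' : |a| * p ≤ p := mul_le_of_le_one_left hp.le ha1
  rcases abs_cases (1 - p) with ⟨h, _⟩ | ⟨h, _⟩ <;> linarith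

/-- `Li_s(a)` as a difference of `s`-dimensional multiple polylogarithms. -/
theorem stmt_9 (s : ℕ) (hs : 2 ≤ s) (a p : ℝ) (hp : p ≠ 1)
    (ha : |a| ≤ min 1 (2 / p - 1)) :
    Li s a =
      LiStar (List.replicate s 1)
          ((1 - p) :: (List.replicate (s - 2) (1 : ℝ) ++ [1 + a * p / (1 - p)])) -
        LiStar (List.replicate s 1) ((1 - p) :: List.replicate (s - 1) (1 : ℝ)) := by
  obtain ⟨d, rfl⟩ := Nat.exists_eq_add_of_le' hs
  have hp0 : 0 < p := pos_of_abs_le_two_div_sub_one (ha.trans (min_le_right _ _))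
  have hsum := abs_one_sub_add_abs_mul_le_one ha
  have hqw : (1 - p) * (a * p / (1 - p)) = a * p := mul_div_cancel₀ _ (sub_ne_zero.2 hp.symm)
  -- For `a = 0` the two star sums coincide, also at `p = 2`, where they do not converge absolutely.
  rcases eq_or_ne a 0 with rfl | ha0
  · rw [zero_mul, zero_div, add_zero, ← List.replicate_succ', Nat.add_sub_cancel]
    simp [Li]
  have hq : |1 - p| < 1 := by linarith [mul_pos (abs_pos.2 ha0) hp0]
  have hqw_le : |1 - p| * (1 + |a * p / (1 - p)|) ≤ 1 := by
    rwa [mul_add, mul_one, ← abs_mul, hqw, abs_mul, abs_of_pos hp0]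
  have harg : a * p / (1 - (1 - p)) = a := by
    rw [sub_sub_cancel, mul_div_cancel_right₀ _ hp0.ne']
  have hmain := liStar_sub_liStar hq hqw_le d
  rw [hqw, harg] at hmain
  exact hmain.symm
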